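/- There exists an absolute constant C such that: for every finite undirected unweighted simple graph G on n vertices and every finite set P of pairs of vertices of G, there is a subgraph H ⊆ G with at most C · n · |P|^(1/4) edges such that for every pair (s,t) ∈ P with s, t connected in G, dist_H(s,t) ≤ dist_G(s,t) + 6. -/

import Mathlib

/-!
Group the vertices into star clusters, keeping the edges of the stars and all edges at unclustered
vertices; then a shortest path can only miss edges between clustered vertices. For each pair of `P`
fix a shortest path and keep its first `k` and its last `k` missing edges. If in a supergraph `H`
the pair is not within `+6`, then no cluster met by the middle part of the path is joined by a
detour of excess two to clusters on both the first and the last `k + 1` missing edges, since two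
such detours, together with the two ends of the path, would form a walk of length at most the
distance plus six. Hence adding the middle part brings every one of its clusters closer to all the
clusters of one end. An added edge thus improves about `k` distances between centers, each of which
can improve only boundedly often, so at most about `z² / k` edges are added, where `z` is the
number of clusters. Stars with `h` leaves cost `n h` edges and leave `z ≤ n / h` clusters;
`h ≈ |P|^(1/4)` and `k ≈ n / |P|^(3/4)` balance the total `n h + k |P| + n² / (h² k)`.
-/

namespace PairwiseSpanner

open Finset SimpleGraph

section CountingLemmas

lemma exists_card_filter_lt_le_eq {α : Type*} [LinearOrder α] (M : Finset α) {k : ℕ}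
    (hk : k < #M) : ∃ a, #{x ∈ M | x < a} = k ∧ #{x ∈ M | x ≤ a} = k + 1 := by
  have hfilter : ∀ p : α → Prop, [DecidablePred p] →
      #{x ∈ M | p x} = #{i | p (M.orderEmbOfFin rfl i)} := fun p _ ↦ by
    rw [← card_map (M.orderEmbOfFin rfl).toEmbedding]
    conv_lhs => rw [← M.map_orderEmbOfFin_univ rfl, filter_map]
    rfl
  exact ⟨M.orderEmbOfFin rfl ⟨k, hk⟩, by simp [hfilter, filter_gt_eq_Iio],
    by simp [hfilter, filter_ge_eq_Iic]⟩

lemma exists_card_filter_gt_ge_eq {α : Type*} [LinearOrder α] (M : Finset α) {k : ℕ}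
    (hk : k < #M) : ∃ b, #{x ∈ M | b < x} = k ∧ #{x ∈ M | b ≤ x} = k + 1 :=
  exists_card_filter_lt_le_eq (α := αᵒᵈ) M hk

lemma card_le_three_of_forall_le_add_two {S : Finset ℕ} (h : ∀ i ∈ S, ∀ j ∈ S, j ≤ i + 2) :
    #S ≤ 3 := by
  rcases S.eq_empty_or_nonempty with rfl | hne
  · simp
  · have hsub : S ⊆ Icc (S.min' hne) (S.min' hne + 2) := fun x hx ↦
      mem_Icc.2 ⟨S.min'_le x hx, h _ (S.min'_mem hne) x hx⟩
    simpa [add_assoc] using card_le_card hsub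

end CountingLemmas

section Graphs

variable {V : Type*} {G H : SimpleGraph V} {r : ℕ → V} {D : ℕ}

lemma ncard_edgeSet_le_of_orientation [Fintype V] (N : V → Finset V) {d : ℕ}
    (hN : ∀ u v, H.Adj u v → v ∈ N u ∨ u ∈ N v) (hd : ∀ v, #(N v) ≤ d) :
    H.edgeSet.ncard ≤ Fintype.card V * d := by
  classical
  have hcover : H.edgeSet ⊆ univ.biUnion fun u ↦ (N u).image fun v ↦ s(u, v) := by
    intro e he
    induction e using Sym2.ind with
    | _ u v =>
      simp only [coe_biUnion, Set.mem_iUnion, coe_image, Set.mem_image, mem_coe, mem_univ]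
      rcases hN u v he with h | h
      · exact ⟨u, trivial, v, h, rfl⟩
      · exact ⟨v, trivial, u, h, Sym2.eq_swap⟩
  calc H.edgeSet.ncard ≤ #(univ.biUnion fun u ↦ (N u).image fun v ↦ s(u, v)) := by
        rw [← Set.ncard_coe_finset]
        exact Set.ncard_le_ncard hcover (finite_toSet _)
    _ ≤ Fintype.card V * d :=
        card_biUnion_le_card_mul _ _ _ fun u _ ↦ card_image_le.trans (hd u)

lemma ncard_edgeSet_sup_fromEdgeSet_le [Finite V] (H : SimpleGraph V) (E : Finset (Sym2 V)) :
    (H ⊔ fromEdgeSet (E : Set (Sym2 V))).edgeSet.ncard ≤ H.edgeSet.ncard + #E := by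
  rw [edgeSet_sup, edgeSet_fromEdgeSet, ← Set.ncard_coe_finset E]
  exact (Set.ncard_le_ncard (Set.union_subset_union_right _ Set.sdiff_subset)).trans
    (Set.ncard_union_le _ _)

lemma sup_fromEdgeSet_le {E : Set (Sym2 V)} (hH : H ≤ G) (hE : E ⊆ G.edgeSet) :
    H ⊔ fromEdgeSet E ≤ G :=
  sup_le hH ((fromEdgeSet_le G).2 (Set.sdiff_subset.trans hE))

lemma subset_edgeSet_sup_fromEdgeSet {E : Set (Sym2 V)} (hE : E ⊆ G.edgeSet) :
    E ⊆ (H ⊔ fromEdgeSet E).edgeSet := fun e he ↦ by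
  rw [edgeSet_sup, edgeSet_fromEdgeSet]
  exact .inr ⟨he, G.not_isDiag_of_mem_edgeSet (hE he)⟩

lemma edist_le_of_forall_adj_succ {i j : ℕ} (hij : i ≤ j)
    (h : ∀ x, i ≤ x → x < j → G.Adj (r x) (r (x + 1))) :
    G.edist (r i) (r j) ≤ (j - i : ℕ) := by
  induction j, hij using Nat.le_induction with
  | base => simp
  | succ j hij ih =>
    rw [Nat.sub_add_comm hij, Nat.cast_add, Nat.cast_one]
    exact SimpleGraph.edist_triangle.trans (add_le_add
      (ih fun x hix hxj ↦ h x hix (hxj.trans j.lt_succ_self))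
      (edist_eq_one_iff_adj.2 (h j hij j.lt_succ_self)).le)

/-- The vertices `r 0, …, r D` form a shortest path of `G`; the values of `r` beyond `D` are
irrelevant. -/
def IsGeodesic (G : SimpleGraph V) (r : ℕ → V) (D : ℕ) : Prop :=
  ∀ i j, i ≤ j → j ≤ D → G.edist (r i) (r j) = (j - i : ℕ)

lemma IsGeodesic.adj_succ (hr : IsGeodesic G r D) {x : ℕ} (hx : x < D) :
    G.Adj (r x) (r (x + 1)) := by
  simpa using hr x (x + 1) x.le_succ hx

lemma exists_isGeodesic {s t : V} (hst : G.Reachable s t) :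
    ∃ r, r 0 = s ∧ r (G.dist s t) = t ∧ IsGeodesic G r (G.dist s t) := by
  obtain ⟨p, hp⟩ := hst.exists_walk_length_eq_dist
  have hadj : ∀ x < G.dist s t, G.Adj (p.getVert x) (p.getVert (x + 1)) := fun x hx ↦
    p.adj_getVert_succ (hp ▸ hx)
  have hend : p.getVert (G.dist s t) = t := hp ▸ p.getVert_length
  refine ⟨p.getVert, p.getVert_zero, hend, fun i j hij hj ↦ ?_⟩
  have hpre := edist_le_of_forall_adj_succ i.zero_le fun x _ hx ↦ hadj x (by lia)
  have hmid := edist_le_of_forall_adj_succ hij fun x _ hx ↦ hadj x (by lia)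
  have hsuf := edist_le_of_forall_adj_succ hj fun x _ hx ↦ hadj x hx
  rw [hend] at hsuf
  rw [p.getVert_zero] at hpre
  have hupper : (G.dist s t : ℕ∞) ≤ (i - 0 : ℕ) + G.edist (p.getVert i) (p.getVert j)
      + (G.dist s t - j : ℕ) := by
    rw [hst.coe_dist_eq_edist]
    refine SimpleGraph.edist_triangle.trans (add_le_add (SimpleGraph.edist_triangle.trans
      (add_le_add hpre le_rfl)) hsuf)
  obtain ⟨m, hm⟩ := ENat.ne_top_iff_exists.1 (hmid.trans_lt (ENat.natCast_lt_top _)).ne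
  rw [← hm] at hmid hupper ⊢
  norm_cast at hmid hupper ⊢
  lia

end Graphs

/-- A subgraph `graph` of `G` in which every vertex `v` has distance at most one from `center v`,
and which contains every edge of `G` except some of those between *clustered* vertices, that is,
vertices whose center belongs to `centers`. An unclustered vertex may be its own `center`. -/
structure Clustering {V : Type*} (G : SimpleGraph V) where
  graph : SimpleGraph V
  centers : Finset V
  center : V → V
  graph_le : graph ≤ G
  edist_center_le_one : ∀ v, graph.edist v (center v) ≤ 1
  center_mem : ∀ {u v}, G.Adj u v → ¬ graph.Adj u v → center u ∈ centers

section Existence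

variable {V : Type*} [Fintype V] (G : SimpleGraph V)

/-- The vertices with no neighbor in `Z`; these are the vertices left unclustered when the clusters
are stars around the vertices of `Z`. -/
noncomputable def undominated (Z : Finset V) : Finset V := by
  classical exact {u | ∀ c ∈ Z, ¬ G.Adj c u}

variable {G} in
lemma mem_undominated {Z : Finset V} {u : V} :
    u ∈ undominated G Z ↔ ∀ c ∈ Z, ¬ G.Adj c u := by
  simp [undominated]

open Classical in
-- A set of centers that is maximal subject to the first bound works: if `v` had `h` undominated
-- neighbors, then adding `v` to the set would preserve the bound.
lemma exists_centers {h : ℕ} (hh : 0 < h) :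
    ∃ Z : Finset V, #Z * h + #(undominated G Z) ≤ Fintype.card V ∧
      ∀ v, #{u ∈ undominated G Z | G.Adj v u} < h := by
  obtain ⟨Z, -, hZ⟩ := Finite.exists_le_maximal
    (p := fun Z ↦ #Z * h + #(undominated G Z) ≤ Fintype.card V) (a := ∅)
    (by simpa using card_le_univ _)
  refine ⟨Z, hZ.prop, fun v ↦ not_le.1 fun hv ↦ ?_⟩
  have hvZ : v ∉ Z := by
    obtain ⟨u, hu⟩ := card_pos.1 (hh.trans_le hv)
    rw [mem_filter, mem_undominated] at hu
    exact fun hvZ ↦ hu.1 v hvZ hu.2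
  have hinsert : undominated G (insert v Z) = {u ∈ undominated G Z | ¬ G.Adj v u} := by
    ext u
    simp only [mem_filter, mem_undominated, mem_insert, forall_eq_or_imp]
    tauto
  have hbound : #(insert v Z) * h + #(undominated G (insert v Z)) ≤ Fintype.card V := by
    have hsplit := card_filter_add_card_filter_not (s := undominated G Z) (G.Adj v)
    have := hZ.prop
    rw [card_insert_of_notMem hvZ, hinsert]
    lia
  exact hvZ (hZ.le_of_ge hbound (subset_insert v Z) (mem_insert_self v Z))

theorem exists_clustering {h : ℕ} (hh : 0 < h) :
    ∃ K : Clustering G, #K.centers * h ≤ Fintype.card V ∧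
      K.graph.edgeSet.ncard ≤ Fintype.card V * h := by
  classical
  obtain ⟨Z, hZ, hdeg⟩ := exists_centers G hh
  have hcenter : ∀ v, ∃ c, (v ∈ undominated G Z ∧ c = v) ∨
      (v ∉ undominated G Z ∧ c ∈ Z ∧ G.Adj v c) := by
    intro v
    by_cases hv : v ∈ undominated G Z
    · exact ⟨v, .inl ⟨hv, rfl⟩⟩
    · obtain ⟨c, hc, hcv⟩ : ∃ c ∈ Z, G.Adj c v := by simpa [mem_undominated] using hv
      exact ⟨c, .inr ⟨hv, hc, hcv.symm⟩⟩
  choose z hz using hcenter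
  let C : SimpleGraph V := fromRel fun u v ↦ G.Adj u v ∧ (v ∈ undominated G Z ∨ v = z u)
  have hC : ∀ {u v}, C.Adj u v ↔ G.Adj u v ∧
      ((v ∈ undominated G Z ∨ v = z u) ∨ (u ∈ undominated G Z ∨ u = z v)) := by
    intro u v
    simp only [C, fromRel_adj, G.adj_comm v u]
    have := fun h : G.Adj u v ↦ h.ne
    tauto
  refine ⟨⟨C, Z, z, fun u v h ↦ (hC.1 h).1, fun v ↦ ?_, fun {u v} hG hnC ↦ ?_⟩,
    le_of_add_le_left hZ, ?_⟩
  · rcases hz v with ⟨-, h⟩ | ⟨-, -, h⟩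
    · simp [h]
    · exact (edist_eq_one_iff_adj.2 (hC.2 ⟨h, .inl (.inr rfl)⟩)).le
  · rcases hz u with ⟨h, -⟩ | ⟨-, h, -⟩
    · exact absurd (hC.2 ⟨hG, .inr (.inl h)⟩) hnC
    · exact h
  · refine ncard_edgeSet_le_of_orientation
      (fun v ↦ insert (z v) {u ∈ undominated G Z | G.Adj v u}) (fun u v huv ↦ ?_)
      fun v ↦ (card_insert_le _ _).trans (hdeg v)
    have := hC.1 huv
    simp only [mem_insert, mem_filter, G.adj_comm v u]
    tauto

end Existence


section UnmetDemands

variable {V : Type*} {G H H' : SimpleGraph V} {Z : Finset V}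

open Classical in
/-- The triples `(x, y, j)` with `x, y ∈ Z` and `j < 5` such that the distance from `x` to `y` in
`H` exceeds the one in `G` by more than `j`. Their number measures how far `H` is from preserving
the distances between centers; an excess above five counts as five. -/
noncomputable def unmetDemands (G : SimpleGraph V) (Z : Finset V) (H : SimpleGraph V) :
    Finset (V × V × ℕ) :=
  {q ∈ Z ×ˢ Z ×ˢ range 5 | G.edist q.1 q.2.1 + q.2.2 < H.edist q.1 q.2.1}

lemma card_unmetDemands_le : #(unmetDemands G Z H) ≤ 5 * #Z ^ 2 :=
  (card_filter_le _ _).trans_eq (by simp only [card_product, card_range]; ring)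

lemma unmetDemands_anti (h : H ≤ H') : unmetDemands G Z H' ⊆ unmetDemands G Z H :=
  monotone_filter_right _ fun _ _ hq ↦ hq.trans_le (edist_anti h)

lemma card_mul_card_add_card_unmetDemands_le {X Y : Finset V} (hX : X ⊆ Z) (hY : Y ⊆ Z)
    (hHH' : H ≤ H')
    (h : ∀ x ∈ X, ∀ y ∈ Y, ∃ j < 5,
      G.edist x y + (j : ℕ) < H.edist x y ∧ H'.edist x y ≤ G.edist x y + (j : ℕ)) :
    #X * #Y + #(unmetDemands G Z H') ≤ #(unmetDemands G Z H) := by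
  classical
  choose! j hj5 hjH hjH' using h
  let f : V × V → V × V × ℕ := fun p ↦ (p.1, p.2, j p.1 p.2)
  have hf : Function.Injective f := fun p q hpq ↦ by
    simp only [f, Prod.mk.injEq] at hpq
    exact Prod.ext hpq.1 hpq.2.1
  have hmet : (X ×ˢ Y).image f ⊆ unmetDemands G Z H \ unmetDemands G Z H' := by
    rw [image_subset_iff]
    rintro ⟨x, y⟩ hxy
    obtain ⟨hx, hy⟩ := mem_product.1 hxy
    simp only [f, unmetDemands, mem_sdiff, mem_filter, mem_product, mem_range, not_and, not_lt]
    exact ⟨⟨⟨hX hx, hY hy, hj5 x hx y hy⟩, hjH x hx y hy⟩, fun _ ↦ hjH' x hx y hy⟩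
  calc #X * #Y + #(unmetDemands G Z H') = #((X ×ˢ Y).image f) + #(unmetDemands G Z H') := by
        rw [card_image_of_injective _ hf, card_product]
    _ ≤ #(unmetDemands G Z H \ unmetDemands G Z H') + #(unmetDemands G Z H') := by
        gcongr
    _ = #(unmetDemands G Z H) := card_sdiff_add_card_eq_card (unmetDemands_anti hHH')

end UnmetDemands

namespace Clustering

variable {V : Type*} {G H H' : SimpleGraph V} {r : ℕ → V} {D k : ℕ} (K : Clustering G)

section Detours

variable {K}

lemma edist_center_le_one_of_le (hKH : K.graph ≤ H) (v : V) : H.edist v (K.center v) ≤ 1 :=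
  (edist_anti hKH).trans (K.edist_center_le_one v)

lemma edist_center_center_le (hKH : K.graph ≤ H) (u v : V) :
    H.edist (K.center u) (K.center v) ≤ H.edist u v + 2 :=
  calc H.edist (K.center u) (K.center v)
      ≤ H.edist (K.center u) u + H.edist u v + H.edist v (K.center v) :=
        SimpleGraph.edist_triangle.trans (add_le_add SimpleGraph.edist_triangle le_rfl)
    _ ≤ 1 + H.edist u v + 1 := by
        rw [H.edist_comm (u := K.center u)]
        gcongr <;> exact edist_center_le_one_of_le hKH _
    _ = H.edist u v + 2 := by ring

lemma edist_le_edist_center_center (hKH : K.graph ≤ H) (u v : V) :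
    H.edist u v ≤ H.edist (K.center u) (K.center v) + 2 :=
  calc H.edist u v
      ≤ H.edist u (K.center u) + H.edist (K.center u) (K.center v) + H.edist (K.center v) v :=
        SimpleGraph.edist_triangle.trans (add_le_add SimpleGraph.edist_triangle le_rfl)
    _ ≤ 1 + H.edist (K.center u) (K.center v) + 1 := by
        rw [H.edist_comm (v := v)]
        gcongr <;> exact edist_center_le_one_of_le hKH _
    _ = H.edist (K.center u) (K.center v) + 2 := by ring

/-- The clusters of `r i` and `r j` are linked in `H` if the distance in `H` between their centers
is at most that of the detour which follows the sequence `r` from `i` to `j`. -/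
def Linked (K : Clustering G) (H : SimpleGraph V) (r : ℕ → V) (i j : ℕ) : Prop :=
  H.edist (K.center (r i)) (K.center (r j)) ≤ (j - i + 2 : ℕ)

lemma linked_of_forall_adj_succ (hKH : K.graph ≤ H) {i j : ℕ} (hij : i ≤ j)
    (h : ∀ x, i ≤ x → x < j → H.Adj (r x) (r (x + 1))) : K.Linked H r i j :=
  (edist_center_center_le hKH _ _).trans
    (by simpa using add_le_add_left (edist_le_of_forall_adj_succ hij h) 2)

lemma edist_le_add_six_of_linked (hKH : K.graph ≤ H) {i a c b j : ℕ} (hia : i ≤ a) (hac : a ≤ c)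
    (hcb : c ≤ b) (hbj : b < j) (hjD : j ≤ D)
    (hH : ∀ x < D, x < a ∨ b < x → H.Adj (r x) (r (x + 1)))
    (hlink : K.Linked H r i c) (hlink' : K.Linked H r c j) :
    H.edist (r 0) (r D) ≤ D + 6 :=
  calc H.edist (r 0) (r D)
      ≤ H.edist (r 0) (r i) + H.edist (r i) (r j) + H.edist (r j) (r D) :=
        SimpleGraph.edist_triangle.trans (add_le_add SimpleGraph.edist_triangle le_rfl)
    _ ≤ H.edist (r 0) (r i) + (H.edist (K.center (r i)) (K.center (r c)) +
          H.edist (K.center (r c)) (K.center (r j)) + 2) + H.edist (r j) (r D) := by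
        gcongr
        exact (edist_le_edist_center_center hKH _ _).trans
          (add_le_add SimpleGraph.edist_triangle le_rfl)
    _ ≤ (i - 0 : ℕ) + ((c - i + 2 : ℕ) + (j - c + 2 : ℕ) + 2) + (D - j : ℕ) :=
        add_le_add (add_le_add
          (edist_le_of_forall_adj_succ i.zero_le fun x _ hx ↦ hH x (by lia) (.inl (by lia)))
          (add_le_add (add_le_add hlink hlink') le_rfl))
          (edist_le_of_forall_adj_succ hjD fun x hx hxD ↦ hH x hxD (.inr (by lia)))
    _ = D + 6 := by
        norm_cast
        lia

end Detours

section Progress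

open Classical in
/-- The indices on the path `r 0, …, r D` whose vertices are clustered. -/
noncomputable def clusteredIndices (r : ℕ → V) (D : ℕ) : Finset ℕ :=
  {i ∈ range (D + 1) | K.center (r i) ∈ K.centers}

open Classical in
/-- The indices `x` for which the edge from `r x` to `r (x + 1)` of the path `r 0, …, r D` is not in
the graph of the clustering. -/
noncomputable def missing (r : ℕ → V) (D : ℕ) : Finset ℕ :=
  {x ∈ range D | ¬ K.graph.Adj (r x) (r (x + 1))}

variable {K}

lemma mem_clusteredIndices {i : ℕ} :
    i ∈ K.clusteredIndices r D ↔ i ≤ D ∧ K.center (r i) ∈ K.centers := by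
  simp [clusteredIndices]

lemma mem_missing {x : ℕ} : x ∈ K.missing r D ↔ x < D ∧ ¬ K.graph.Adj (r x) (r (x + 1)) := by
  simp [missing]

lemma mem_clusteredIndices_of_mem_missing (hG : ∀ x < D, G.Adj (r x) (r (x + 1))) {x : ℕ}
    (hx : x ∈ K.missing r D) : x ∈ K.clusteredIndices r D ∧ x + 1 ∈ K.clusteredIndices r D := by
  obtain ⟨hxD, hxK⟩ := mem_missing.1 hx
  have hadj := hG x hxD
  exact ⟨mem_clusteredIndices.2 ⟨hxD.le, K.center_mem hadj hxK⟩,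
    mem_clusteredIndices.2 ⟨hxD, K.center_mem hadj.symm fun h ↦ hxK h.symm⟩⟩

lemma le_add_two_of_center_eq (hr : IsGeodesic G r D) {i j : ℕ} (hj : j ≤ D)
    (h : K.center (r i) = K.center (r j)) : j ≤ i + 2 := by
  rcases le_total j i with hji | hij
  · lia
  · have := edist_le_edist_center_center K.graph_le (r i) (r j)
    rw [hr i j hij hj, h, edist_self, zero_add] at this
    norm_cast at this
    lia

open Classical in
lemma card_le_three_mul_card_image_center (hr : IsGeodesic G r D) {S : Finset ℕ}
    (hS : S ⊆ K.clusteredIndices r D) : #S ≤ 3 * #(S.image fun i ↦ K.center (r i)) := by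
  refine card_le_mul_card_image S 3 fun c _ ↦ card_le_three_of_forall_le_add_two fun i hi j hj ↦ ?_
  obtain ⟨-, hic⟩ := mem_filter.1 hi
  obtain ⟨hj, hjc⟩ := mem_filter.1 hj
  exact le_add_two_of_center_eq hr (mem_clusteredIndices.1 (hS hj)).1 (hic.trans hjc.symm)

lemma exists_demand_met (hr : IsGeodesic G r D) (hH'G : H' ≤ G) {i j : ℕ} (hij : i ≤ j)
    (hjD : j ≤ D) (hlink : ¬ K.Linked H r i j) (hlink' : K.Linked H' r i j) :
    ∃ n < 5, G.edist (K.center (r i)) (K.center (r j)) + (n : ℕ) <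
        H.edist (K.center (r i)) (K.center (r j)) ∧
      H'.edist (K.center (r i)) (K.center (r j)) ≤
        G.edist (K.center (r i)) (K.center (r j)) + (n : ℕ) := by
  have hlower := edist_le_edist_center_center K.graph_le (r i) (r j)
  rw [hr i j hij hjD] at hlower
  have hupper := (edist_anti hH'G).trans hlink'
  rw [Linked, not_le] at hlink
  rw [Linked] at hlink'
  obtain ⟨d, hd⟩ := ENat.ne_top_iff_exists.1 (hupper.trans_lt (ENat.natCast_lt_top _)).ne
  rw [← hd] at hlower hupper ⊢
  norm_cast at hlower hupper
  refine ⟨j - i + 2 - d, by lia, ?_⟩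
  have hlength : (d : ℕ∞) + (j - i + 2 - d : ℕ) = (j - i + 2 : ℕ) := by
    norm_cast
    lia
  rw [hlength]
  exact ⟨hlink, hlink'⟩

lemma card_mul_card_add_nine_mul_card_unmetDemands_le (hr : IsGeodesic G r D) (hHH' : H ≤ H')
    (hH'G : H' ≤ G) {I J : Finset ℕ} (hI : I ⊆ K.clusteredIndices r D)
    (hJ : J ⊆ K.clusteredIndices r D) (hIJ : ∀ i ∈ I, ∀ j ∈ J, i ≤ j)
    (hlink : ∀ i ∈ I, ∀ j ∈ J, ¬ K.Linked H r i j)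
    (hlink' : ∀ i ∈ I, ∀ j ∈ J, K.Linked H' r i j) :
    #I * #J + 9 * #(unmetDemands G K.centers H') ≤ 9 * #(unmetDemands G K.centers H) := by
  classical
  have hcenters : ∀ {S}, S ⊆ K.clusteredIndices r D →
      (S.image fun i ↦ K.center (r i)) ⊆ K.centers := fun hS ↦
    image_subset_iff.2 fun i hi ↦ (mem_clusteredIndices.1 (hS hi)).2
  have hdrop := card_mul_card_add_card_unmetDemands_le (G := G) (hcenters hI) (hcenters hJ) hHH' (by
    simp only [forall_mem_image]
    exact fun i hi j hj ↦ exists_demand_met hr hH'G (hIJ i hi j hj)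
      (mem_clusteredIndices.1 (hJ hj)).1 (hlink i hi j hj) (hlink' i hi j hj))
  have hfibers := Nat.mul_le_mul (card_le_three_mul_card_image_center hr hI)
    (card_le_three_mul_card_image_center hr hJ)
  lia

lemma card_mul_add_eighteen_mul_card_unmetDemands_le (hr : IsGeodesic G r D) (hKH : K.graph ≤ H)
    (hHH' : H ≤ H') (hH'G : H' ≤ G) (hpath : ∀ x < D, H'.Adj (r x) (r (x + 1)))
    {A M B : Finset ℕ} (hA : A ⊆ K.clusteredIndices r D) (hM : M ⊆ K.clusteredIndices r D)
    (hB : B ⊆ K.clusteredIndices r D) (hAM : ∀ i ∈ A, ∀ c ∈ M, i ≤ c)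
    (hMB : ∀ c ∈ M, ∀ j ∈ B, c ≤ j) (hAk : k ≤ #A) (hBk : k ≤ #B)
    (hlink : ∀ c ∈ M, ∀ i ∈ A, ∀ j ∈ B, K.Linked H r i c → ¬ K.Linked H r c j) :
    k * #M + 18 * #(unmetDemands G K.centers H') ≤ 18 * #(unmetDemands G K.centers H) := by
  classical
  let M₁ : Finset ℕ := {c ∈ M | ∀ i ∈ A, ¬ K.Linked H r i c}
  let M₂ : Finset ℕ := {c ∈ M | ¬ ∀ i ∈ A, ¬ K.Linked H r i c}
  have hM₁ : M₁ ⊆ M := filter_subset _ _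
  have hM₂ : M₂ ⊆ M := filter_subset _ _
  have hsplit : #M₁ + #M₂ = #M := card_filter_add_card_filter_not _
  have hlinked : ∀ {i j}, i ≤ j → j ∈ K.clusteredIndices r D → K.Linked H' r i j :=
    fun hij hj ↦ linked_of_forall_adj_succ (hKH.trans hHH') hij fun x _ hx ↦
      hpath x (hx.trans_le (mem_clusteredIndices.1 hj).1)
  have hleft := card_mul_card_add_nine_mul_card_unmetDemands_le hr hHH' hH'G hA (hM₁.trans hM)
    (fun i hi c hc ↦ hAM i hi c (hM₁ hc)) (fun i hi c hc ↦ (mem_filter.1 hc).2 i hi)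
    fun i hi c hc ↦ hlinked (hAM i hi c (hM₁ hc)) (hM (hM₁ hc))
  have hright := card_mul_card_add_nine_mul_card_unmetDemands_le hr hHH' hH'G (hM₂.trans hM) hB
    (fun c hc j hj ↦ hMB c (hM₂ hc) j hj)
    (fun c hc j hj ↦ by
      obtain ⟨hcM, hcA⟩ := mem_filter.1 hc
      push Not at hcA
      obtain ⟨i, hi, hic⟩ := hcA
      exact hlink c hcM i hi j hj hic)
    fun c hc j hj ↦ hlinked (hMB c (hM₂ hc) j hj) (hB hj)
  have hleftCard := Nat.mul_le_mul_right #M₁ hAk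
  have hrightCard := Nat.mul_le_mul_left #M₂ hBk
  rw [← hsplit]
  lia

end Progress

section Greedy

/-- The quantity that does not increase when the missing middle part of a path with `k + 1` missing
edges at either end is added to `H`. Each added edge meets `(k + 1) / 18` demands on average: a
clustered vertex of the middle part meets the demands with one of the two ends only, which costs a
factor two, and a center serves up to three vertices of the path, which costs a factor three at each
end of a demand. -/
noncomputable def potential (k : ℕ) (H : SimpleGraph V) : ℕ :=
  (k + 1) * H.edgeSet.ncard + 18 * #(unmetDemands G K.centers H)

variable {K}

open Classical in
/-- The edges from `r x` to `r (x + 1)`, for `x ∈ S`, of the sequence `r`. -/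
noncomputable def pathEdges (r : ℕ → V) (S : Finset ℕ) : Finset (Sym2 V) :=
  S.image fun x ↦ s(r x, r (x + 1))

lemma card_pathEdges_le (r : ℕ → V) (S : Finset ℕ) : #(pathEdges r S) ≤ #S := by
  classical exact card_image_le

lemma coe_pathEdges_subset_iff {S : Finset ℕ} :
    (pathEdges r S : Set (Sym2 V)) ⊆ H.edgeSet ↔ ∀ x ∈ S, H.Adj (r x) (r (x + 1)) := by
  simp [pathEdges, Set.subset_def]

lemma adj_succ_of_mem_missing_imp (hKH : K.graph ≤ H) {x : ℕ} (hx : x < D)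
    (h : x ∈ K.missing r D → H.Adj (r x) (r (x + 1))) : H.Adj (r x) (r (x + 1)) := by
  by_cases hK : K.graph.Adj (r x) (r (x + 1))
  · exact hKH hK
  · exact h (mem_missing.2 ⟨hx, hK⟩)

lemma exists_supergraph_of_path [Finite V] (hG : ∀ x < D, G.Adj (r x) (r (x + 1)))
    (hKH : K.graph ≤ H) (hHG : H ≤ G) {a b : ℕ}
    (hH : ∀ x < D, x < a ∨ b < x → H.Adj (r x) (r (x + 1))) :
    ∃ H', H ≤ H' ∧ H' ≤ G ∧ (∀ x < D, H'.Adj (r x) (r (x + 1))) ∧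
      H'.edgeSet.ncard ≤ H.edgeSet.ncard + #{x ∈ K.missing r D | a ≤ x ∧ x ≤ b} := by
  classical
  let E := pathEdges r {x ∈ K.missing r D | a ≤ x ∧ x ≤ b}
  have hEG : (E : Set (Sym2 V)) ⊆ G.edgeSet := coe_pathEdges_subset_iff.2 fun x hx ↦
    hG x (mem_missing.1 (mem_filter.1 hx).1).1
  refine ⟨H ⊔ fromEdgeSet E, le_sup_left, sup_fromEdgeSet_le hHG hEG, fun x hx ↦ ?_,
    (ncard_edgeSet_sup_fromEdgeSet_le H E).trans
      (Nat.add_le_add_left (card_pathEdges_le _ _) _)⟩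
  refine adj_succ_of_mem_missing_imp (hKH.trans le_sup_left) hx fun hxm ↦ ?_
  by_cases hmid : a ≤ x ∧ x ≤ b
  · exact coe_pathEdges_subset_iff.1 (subset_edgeSet_sup_fromEdgeSet hEG) x
      (mem_filter.2 ⟨hxm, hmid⟩)
  · exact .inl (hH x hx (by lia))

lemma exists_lt_potential_le [Finite V] (hr : IsGeodesic G r D) (hKH : K.graph ≤ H) (hHG : H ≤ G)
    {a b : ℕ} (hA : k < #{x ∈ K.missing r D | x ≤ a}) (hB : k < #{x ∈ K.missing r D | b ≤ x})
    (hH : ∀ x < D, x < a ∨ b < x → H.Adj (r x) (r (x + 1)))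
    (hfar : ¬ H.edist (r 0) (r D) ≤ D + 6) :
    ∃ H', H < H' ∧ H' ≤ G ∧ K.potential k H' ≤ K.potential k H := by
  let A : Finset ℕ := {x ∈ K.missing r D | x ≤ a}
  let M : Finset ℕ := {x ∈ K.missing r D | a ≤ x ∧ x ≤ b}
  let B : Finset ℕ := ({x ∈ K.missing r D | b ≤ x}).image Nat.succ
  have hG : ∀ x < D, G.Adj (r x) (r (x + 1)) := fun _ ↦ hr.adj_succ
  have hclustered := fun x ↦ mem_clusteredIndices_of_mem_missing (K := K) (x := x) hG
  have hAsub : A ⊆ K.clusteredIndices r D := fun x hx ↦ (hclustered x (mem_filter.1 hx).1).1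
  have hMsub : M ⊆ K.clusteredIndices r D := fun x hx ↦ (hclustered x (mem_filter.1 hx).1).1
  have hBsub : B ⊆ K.clusteredIndices r D := image_subset_iff.2 fun x hx ↦
    (hclustered x (mem_filter.1 hx).1).2
  have hAle : ∀ i ∈ A, i ≤ a := fun i hi ↦ (mem_filter.1 hi).2
  have hMle : ∀ c ∈ M, a ≤ c ∧ c ≤ b := fun c hc ↦ (mem_filter.1 hc).2
  have hBlt : ∀ j ∈ B, b < j := by
    simp only [B, forall_mem_image]
    exact fun x hx ↦ Nat.lt_succ_of_le (mem_filter.1 hx).2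
  obtain ⟨H', hHH', hH'G, hpath, hedges⟩ := exists_supergraph_of_path hG hKH hHG hH
  have hne : H ≠ H' := by
    rintro rfl
    exact hfar ((edist_le_of_forall_adj_succ D.zero_le fun x _ ↦ hpath x).trans
      (self_le_add_right _ _))
  have hdemands := card_mul_add_eighteen_mul_card_unmetDemands_le (k := k + 1) hr hKH hHH' hH'G
    hpath hAsub hMsub hBsub (fun i hi c hc ↦ (hAle i hi).trans (hMle c hc).1)
    (fun c hc j hj ↦ (hMle c hc).2.trans (hBlt j hj).le) hA
    (by rwa [card_image_of_injective _ Nat.succ_injective])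
    fun c hc i hi j hj hic hcj ↦ hfar <| edist_le_add_six_of_linked hKH (hAle i hi)
      (hMle c hc).1 (hMle c hc).2 (hBlt j hj) (mem_clusteredIndices.1 (hBsub hj)).1 hH hic hcj
  have hcost := Nat.mul_le_mul_left (k + 1) hedges
  refine ⟨H', hHH'.lt_of_ne hne, hH'G, ?_⟩
  simp only [potential]
  lia

variable (K) in
lemma exists_seed_edges [Finite V] (k : ℕ) (s t : V) :
    ∃ E : Finset (Sym2 V), #E ≤ 2 * k ∧ (E : Set (Sym2 V)) ⊆ G.edgeSet ∧
      ∀ H, K.graph ≤ H → H ≤ G → (E : Set (Sym2 V)) ⊆ H.edgeSet →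
        ¬ H.edist s t ≤ G.edist s t + 6 →
        ∃ H', H < H' ∧ H' ≤ G ∧ K.potential k H' ≤ K.potential k H := by
  by_cases hst : G.Reachable s t
  swap
  · exact ⟨∅, by simp, by simp, by simp [edist_eq_top_of_not_reachable hst]⟩
  obtain ⟨r, hrs, hrt, hr⟩ := exists_isGeodesic hst
  rw [← hst.coe_dist_eq_edist]
  have hG : ∀ x ∈ K.missing r (G.dist s t), G.Adj (r x) (r (x + 1)) := fun x hx ↦
    hr.adj_succ (mem_missing.1 hx).1
  rcases le_or_gt #(K.missing r (G.dist s t)) k with hfew | hmany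
  · refine ⟨pathEdges r (K.missing r (G.dist s t)), (card_pathEdges_le _ _).trans (by lia),
      coe_pathEdges_subset_iff.2 hG, fun H hKH _ hEH hfar ↦ absurd ?_ hfar⟩
    have hpath := edist_le_of_forall_adj_succ (Nat.zero_le _) fun x _ hx ↦
      adj_succ_of_mem_missing_imp hKH hx (coe_pathEdges_subset_iff.1 hEH x)
    rw [hrs, hrt] at hpath
    exact hpath.trans (self_le_add_right _ _)
  · obtain ⟨a, hlta, hlea⟩ := exists_card_filter_lt_le_eq _ hmany
    obtain ⟨b, hgtb, hgeb⟩ := exists_card_filter_gt_ge_eq _ hmany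
    refine ⟨pathEdges r {x ∈ K.missing r (G.dist s t) | x < a ∨ b < x},
      (card_pathEdges_le _ _).trans ?_,
      coe_pathEdges_subset_iff.2 fun x hx ↦ hG x (mem_filter.1 hx).1,
      fun H hKH hHG hEH hfar ↦ exists_lt_potential_le hr hKH hHG (a := a) (b := b) (by lia) (by lia)
        (fun x hx hxab ↦ adj_succ_of_mem_missing_imp hKH hx fun hxm ↦
          coe_pathEdges_subset_iff.1 hEH x (mem_filter.2 ⟨hxm, hxab⟩)) (by rwa [hrs, hrt])⟩
    rw [filter_or]
    exact (card_union_le _ _).trans (by lia)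

variable (K) in
-- A graph that is maximal among those between `H₀` and `G` of potential at most that of `H₀` works:
-- a pair that is not within `+6` would produce a larger one.
lemma exists_edist_le_add_six [Finite V] (k : ℕ) (P : Finset (V × V)) :
    ∃ H ≤ G, (∀ p ∈ P, H.edist p.1 p.2 ≤ G.edist p.1 p.2 + 6) ∧
      (k + 1) * H.edgeSet.ncard ≤
        (k + 1) * (K.graph.edgeSet.ncard + 2 * k * #P) + 90 * #K.centers ^ 2 := by
  classical
  choose E hEcard hEG hE using fun p : V × V ↦ K.exists_seed_edges k p.1 p.2
  let H₀ := K.graph ⊔ fromEdgeSet (P.biUnion E : Set (Sym2 V))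
  have hPG : (P.biUnion E : Set (Sym2 V)) ⊆ G.edgeSet := by
    simpa using fun p _ ↦ hEG p
  have hH₀G : H₀ ≤ G := sup_fromEdgeSet_le K.graph_le hPG
  obtain ⟨H, hH₀H, hH⟩ := Finite.exists_le_maximal
    (p := fun H ↦ H ≤ G ∧ K.potential k H ≤ K.potential k H₀) (a := H₀) ⟨hH₀G, le_rfl⟩
  obtain ⟨hHG, hpot⟩ := hH.prop
  refine ⟨H, hHG, fun p hp ↦ ?_, ?_⟩
  · by_contra hfar
    have hEH : (E p : Set (Sym2 V)) ⊆ H.edgeSet :=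
      (coe_subset.2 (subset_biUnion_of_mem E hp)).trans
        ((subset_edgeSet_sup_fromEdgeSet hPG).trans (edgeSet_mono hH₀H))
    obtain ⟨H', hHH', hH'G, hH'⟩ := hE p H (le_sup_left.trans hH₀H) hHG hEH hfar
    exact hHH'.not_ge (hH.le_of_ge ⟨hH'G, hH'.trans hpot⟩ hHH'.le)
  · have hseeds : #(P.biUnion E) ≤ #P * (2 * k) :=
      card_biUnion_le_card_mul _ _ _ fun p _ ↦ hEcard p
    have hedges : H₀.edgeSet.ncard ≤ K.graph.edgeSet.ncard + 2 * k * #P :=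
      (ncard_edgeSet_sup_fromEdgeSet_le _ _).trans (by lia)
    have hdemands := card_unmetDemands_le (G := G) (H := H₀) (Z := K.centers)
    have hcost := Nat.mul_le_mul_left (k + 1) hedges
    simp only [potential] at hpot
    lia

end Greedy

end Clustering

section Tradeoff

variable {V : Type*} [Fintype V] (G : SimpleGraph V) (P : Finset (V × V))

theorem exists_edist_le_add_six_tradeoff {h : ℕ} (hh : 0 < h) (k : ℕ) :
    ∃ H ≤ G, (∀ p ∈ P, H.edist p.1 p.2 ≤ G.edist p.1 p.2 + 6) ∧
      (k + 1) * h ^ 2 * H.edgeSet.ncard ≤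
        (k + 1) * h ^ 2 * (Fintype.card V * h + 2 * k * #P) + 90 * Fintype.card V ^ 2 := by
  obtain ⟨K, hcenters, hedges⟩ := exists_clustering G hh
  obtain ⟨H, hHG, hH, hcard⟩ := K.exists_edist_le_add_six k P
  refine ⟨H, hHG, hH, ?_⟩
  calc (k + 1) * h ^ 2 * H.edgeSet.ncard = h ^ 2 * ((k + 1) * H.edgeSet.ncard) := by ring
    _ ≤ h ^ 2 * ((k + 1) * (Fintype.card V * h + 2 * k * #P) + 90 * #K.centers ^ 2) := by
        refine Nat.mul_le_mul_left _ (hcard.trans ?_)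
        gcongr
    _ = (k + 1) * h ^ 2 * (Fintype.card V * h + 2 * k * #P) + 90 * (#K.centers * h) ^ 2 := by
        ring
    _ ≤ _ := by gcongr

end Tradeoff

lemma le_of_tradeoff_floor_ceil {n q : ℝ} (hn : 0 ≤ n) (hq : 1 ≤ q) {e : ℝ}
    (he : (⌊n / q ^ 3⌋₊ + 1) * (⌈q⌉₊ : ℝ) ^ 2 * e ≤
      (⌊n / q ^ 3⌋₊ + 1) * (⌈q⌉₊ : ℝ) ^ 2 * (n * ⌈q⌉₊ + 2 * ⌊n / q ^ 3⌋₊ * q ^ 4) + 90 * n ^ 2) :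
    e ≤ 94 * n * q := by
  have hq0 : 0 < q := by positivity
  have hceil : q ≤ ⌈q⌉₊ := Nat.le_ceil q
  have hceil' : (⌈q⌉₊ : ℝ) ≤ 2 * q := by linarith [Nat.ceil_lt_add_one hq0.le]
  have hfloor : ⌊n / q ^ 3⌋₊ * q ^ 3 ≤ n :=
    (le_div_iff₀ (by positivity)).1 (Nat.floor_le (by positivity))
  have hfloor' : n ≤ (⌊n / q ^ 3⌋₊ + 1) * q ^ 3 :=
    (div_le_iff₀ (by positivity)).1 (Nat.lt_floor_add_one _).le
  have hkn := Nat.cast_nonneg (α := ℝ) ⌊n / q ^ 3⌋₊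
  generalize (⌈q⌉₊ : ℝ) = h at *
  generalize (⌊n / q ^ 3⌋₊ : ℝ) = k at *
  have hh0 : 0 < h := hq0.trans_le hceil
  have hedges : n * h ≤ 2 * n * q := by nlinarith
  have hseeds : k * q ^ 4 ≤ n * q := by nlinarith
  have hdemands : n ^ 2 ≤ (k + 1) * h ^ 2 * (n * q) :=
    calc n ^ 2 = n * n := sq n
      _ ≤ (k + 1) * q ^ 3 * n := by gcongr
      _ = (k + 1) * q ^ 2 * (n * q) := by ring
      _ ≤ (k + 1) * h ^ 2 * (n * q) := by gcongr
  refine le_of_mul_le_mul_left ?_ (by positivity : 0 < (k + 1) * h ^ 2)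
  calc (k + 1) * h ^ 2 * e ≤ (k + 1) * h ^ 2 * (n * h + 2 * k * q ^ 4) + 90 * n ^ 2 := he
    _ ≤ (k + 1) * h ^ 2 * (2 * n * q + 2 * (n * q)) + 90 * ((k + 1) * h ^ 2 * (n * q)) := by
        gcongr ?_ * ?_ + 90 * ?_
        linarith
    _ = (k + 1) * h ^ 2 * (94 * n * q) := by ring

theorem exists_edist_le_add_six {V : Type*} [Fintype V] (G : SimpleGraph V)
    (P : Finset (V × V)) :
    ∃ H ≤ G, (∀ p ∈ P, H.edist p.1 p.2 ≤ G.edist p.1 p.2 + 6) ∧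
      (H.edgeSet.ncard : ℝ) ≤ 94 * Fintype.card V * (#P : ℝ) ^ (1 / 4 : ℝ) := by
  rcases P.eq_empty_or_nonempty with rfl | hP
  · exact ⟨⊥, bot_le, by simp, by simp⟩
  set q : ℝ := (#P : ℝ) ^ (1 / 4 : ℝ)
  have hq : 1 ≤ q := Real.one_le_rpow (mod_cast hP.card_pos) (by norm_num)
  have hq4 : q ^ 4 = #P := by
    rw [← Real.rpow_natCast, ← Real.rpow_mul (Nat.cast_nonneg _)]
    norm_num
  obtain ⟨H, hHG, hH, hcard⟩ := exists_edist_le_add_six_tradeoff G P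
    (Nat.ceil_pos.2 (zero_lt_one.trans_le hq)) ⌊Fintype.card V / q ^ 3⌋₊
  refine ⟨H, hHG, hH, le_of_tradeoff_floor_ceil (Nat.cast_nonneg _) hq ?_⟩
  rw [hq4]
  exact_mod_cast hcard

end PairwiseSpanner

/-- **Pairwise `+6` additive spanners (Kavitha).** There is an absolute
constant `C` such that: for every finite simple graph `G` on `n` vertices and
every finite set `P` of pairs of vertices, there is a subgraph `H ⊆ G` with at
most `C · n · |P|^(1/4)` edges such that for every `(s,t) ∈ P` with `s, t`
connected in `G`, `dist_H(s,t) ≤ dist_G(s,t) + 6`. -/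
theorem pairwise_plus_six_spanner :
    ∃ C : ℝ, 0 < C ∧
      ∀ (V : Type) [Fintype V] (G : SimpleGraph V) (P : Finset (V × V)),
        ∃ H : SimpleGraph V, H ≤ G ∧
          (H.edgeSet.ncard : ℝ) ≤
            C * (Fintype.card V : ℝ) * (P.card : ℝ) ^ ((1 : ℝ) / 4) ∧
          ∀ p ∈ P, G.Reachable p.1 p.2 →
            H.Reachable p.1 p.2 ∧
            (H.dist p.1 p.2 : ℝ) ≤ (G.dist p.1 p.2 : ℝ) + 6 := by
  refine ⟨94, by norm_num, fun V _ G P ↦ ?_⟩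
  obtain ⟨H, hHG, hH, hcard⟩ := PairwiseSpanner.exists_edist_le_add_six G P
  refine ⟨H, hHG, hcard, fun p hp hpG ↦ ?_⟩
  have hdist := hH p hp
  rw [← hpG.coe_dist_eq_edist] at hdist
  have hpH : H.Reachable p.1 p.2 :=
    SimpleGraph.reachable_of_edist_ne_top (hdist.trans_lt (ENat.natCast_lt_top _)).ne
  rw [← hpH.coe_dist_eq_edist] at hdist
  exact ⟨hpH, mod_cast hdist⟩
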